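/- arXiv:2603.20060 — 2 statements merged into one kernel-verified Lean document; each statement's English description precedes it below -/
import Mathlib

section
/- For all integers n ≥ 2 and d ≥ 2, after n^(3d+12) balls have been placed under UNFAIR with n bins and d choices, with probability at least 1 − O(n^(−d−1)) the following holds: for every pair of distinct bins B_i, B_j there was some time s ≤ n^(3d+12) at which the absolute difference between the load of B_i and the load of B_j was at least n². -/
namespace Unfair

/-- Loads of the `n` bins, starting from `init`, after the balls recorded in `l`
have been placed (each entry of `l` is the bin that received a ball). -/
def loadsOf (n : ℕ) (init : Fin n → ℕ) (l : List (Fin n)) : Fin n → ℕ :=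
  fun b => init b + l.count b

/-- One step of UNFAIR: draw `d` options uniformly from `{1,…,n}^d` (with replacement)
and return the most-loaded option bin, ties broken uniformly at random. -/
noncomputable def stepBin (n d : ℕ) (hn : 0 < n) (hd : 0 < d) (L : Fin n → ℕ) :
    PMF (Fin n) :=
  haveI : NeZero n := ⟨hn.ne'⟩
  haveI : NeZero d := ⟨hd.ne'⟩
  (PMF.uniformOfFintype (Fin d → Fin n)).bind fun opts =>
    PMF.uniformOfFinset
      ((Finset.univ.image opts).filter fun b => ∀ k, L (opts k) ≤ L b)
      (by
        classical
        obtain ⟨b, hb, hmax⟩ := Finset.exists_max_image (Finset.univ.image opts) L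
          (Finset.univ_nonempty.image opts)
        exact ⟨b, Finset.mem_filter.2 ⟨hb, fun k =>
          hmax _ (Finset.mem_image_of_mem _ (Finset.mem_univ k))⟩⟩)

/-- The permutations of `Fin n` that sort the loads `L`: `σ` maps rank (0-indexed,
least-loaded first) to bin, so `L ∘ σ` is monotone. -/
noncomputable def compatPerms (n : ℕ) (L : Fin n → ℕ) : Finset (Equiv.Perm (Fin n)) :=
  @Finset.filter _ (fun σ => Monotone fun i => L (σ i)) (Classical.decPred _) Finset.univ

/-- A uniformly random ranking of the bins by load, ties broken uniformly at random:
a uniform element of the sorting permutations of `L`. -/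
noncomputable def rankPMF (n : ℕ) (L : Fin n → ℕ) : PMF (Equiv.Perm (Fin n)) :=
  PMF.uniformOfFinset (compatPerms n L)
    ⟨Tuple.sort L, by
      simp only [compatPerms, Finset.mem_filter, Finset.mem_univ, true_and]
      exact Tuple.monotone_sort L⟩

/-- The UNFAIR process, run for `m` steps from initial loads `init`.  The outcome is the
history: at each step we record the bin that received the ball together with a uniformly
random load-ranking of the bins (ties broken uniformly at random) just after that step. -/
noncomputable def proc (n d : ℕ) (hn : 0 < n) (hd : 0 < d) (init : Fin n → ℕ) :
    ℕ → PMF (List (Fin n × Equiv.Perm (Fin n)))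
  | 0 => PMF.pure []
  | (m + 1) => (proc n d hn hd init m).bind fun hist =>
      (stepBin n d hn hd (loadsOf n init (hist.map Prod.fst))).bind fun b =>
        (rankPMF n (loadsOf n init (hist.map Prod.fst ++ [b]))).bind fun σ =>
          PMF.pure (hist ++ [(b, σ)])

/-- The loads at time `t` along a history `h`. -/
def trajLoads (n : ℕ) (init : Fin n → ℕ) (h : List (Fin n × Equiv.Perm (Fin n)))
    (t : ℕ) : Fin n → ℕ :=
  loadsOf n init ((h.map Prod.fst).take t)

/-- The ranking permutation at time `s ≥ 1` along a history `h`
(maps rank, 0-indexed least-loaded first, to bin). -/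
def trajRank (n : ℕ) (h : List (Fin n × Equiv.Perm (Fin n))) (s : ℕ) :
    Equiv.Perm (Fin n) :=
  (h.map Prod.snd).getD (s - 1) 1

/-- The load of the `i`-th least-loaded bin (0-indexed) for loads `L`. -/
noncomputable def sortedLoad (n : ℕ) (L : Fin n → ℕ) (i : Fin n) : ℕ :=
  L (Tuple.sort L i)

/-- Expectation of `f` under the distribution `p`. -/
noncomputable def pexp {α : Type*} (p : PMF α) (f : α → ℝ) : ℝ :=
  ∑' a, (p a).toReal * f a

/-- Probability of the event `S` under the distribution `p`, as a real number. -/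
noncomputable def prob {α : Type*} (p : PMF α) (S : Set α) : ℝ :=
  (p.toOuterMeasure S).toReal

end Unfair

namespace Unfair

open scoped ENNReal

/-- Expectation of an extended nonnegative function. -/
noncomputable def EE {α : Type*} (p : PMF α) (f : α → ℝ≥0∞) : ℝ≥0∞ := ∑' a, p a * f a

lemma EE_bind {α β : Type*} (p : PMF α) (q : α → PMF β) (f : β → ℝ≥0∞) :
    EE (p.bind q) f = EE p fun a => EE (q a) f := by
  unfold EE
  simp only [PMF.bind_apply, ← ENNReal.tsum_mul_right, ← ENNReal.tsum_mul_left]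
  rw [ENNReal.tsum_comm]
  simp only [mul_assoc]

lemma EE_pure {α : Type*} (a : α) (f : α → ℝ≥0∞) : EE (PMF.pure a) f = f a := by
  classical
  unfold EE
  rw [tsum_eq_single a]
  · simp
  · intro b hb; simp [PMF.pure_apply, hb]

lemma EE_mono {α : Type*} (p : PMF α) {f g : α → ℝ≥0∞} (h : ∀ a, f a ≤ g a) :
    EE p f ≤ EE p g :=
  ENNReal.tsum_le_tsum fun a => mul_le_mul_right (h a) _

lemma EE_mono_supp {α : Type*} (p : PMF α) {f g : α → ℝ≥0∞} (h : ∀ a ∈ p.support, f a ≤ g a) :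
    EE p f ≤ EE p g := by
  refine ENNReal.tsum_le_tsum fun a => ?_
  by_cases ha : p a = 0
  · simp [ha]
  · exact mul_le_mul_right (h a ((PMF.mem_support_iff _ _).2 ha)) _

lemma EE_const {α : Type*} (p : PMF α) (c : ℝ≥0∞) : EE p (fun _ => c) = c := by
  unfold EE
  rw [ENNReal.tsum_mul_right, p.tsum_coe, one_mul]

lemma EE_add {α : Type*} (p : PMF α) (f g : α → ℝ≥0∞) :
    EE p (fun a => f a + g a) = EE p f + EE p g := by
  unfold EE
  simp only [mul_add, ENNReal.tsum_add]

lemma EE_mul {α : Type*} (p : PMF α) (f : α → ℝ≥0∞) (c : ℝ≥0∞) :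
    EE p (fun a => f a * c) = EE p f * c := by
  unfold EE
  simp only [← mul_assoc, ENNReal.tsum_mul_right]

lemma EE_sum {α ι : Type*} (p : PMF α) (s : Finset ι) (f : ι → α → ℝ≥0∞) :
    EE p (fun a => ∑ i ∈ s, f i a) = ∑ i ∈ s, EE p (f i) := by
  classical
  induction s using Finset.induction_on with
  | empty => simp [EE]
  | insert a s ha ih => simp only [Finset.sum_insert ha, EE_add, ih]

/-- The tie set of most-loaded options. -/
def tops (n d : ℕ) (L : Fin n → ℕ) (o : Fin d → Fin n) : Finset (Fin n) :=
  (Finset.univ.image o).filter fun b => ∀ k, L (o k) ≤ L b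

lemma mem_tops {n d : ℕ} {L : Fin n → ℕ} {o : Fin d → Fin n} {b : Fin n} :
    b ∈ tops n d L o ↔ (∃ k, o k = b) ∧ ∀ k, L (o k) ≤ L b := by
  simp [tops]

lemma stepBin_apply (n d : ℕ) (hn : 0 < n) (hd : 0 < d) (L : Fin n → ℕ) (b : Fin n) :
    stepBin n d hn hd L b = ∑ o : Fin d → Fin n, ((n : ℝ≥0∞) ^ d)⁻¹ *
      (if b ∈ tops n d L o then ((tops n d L o).card : ℝ≥0∞)⁻¹ else 0) := by
  unfold stepBin
  simp only [PMF.bind_apply, PMF.uniformOfFintype_apply, PMF.uniformOfFinset_apply, tsum_fintype]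
  simp [tops]

lemma tops_swap_card {n d : ℕ} {L : Fin n → ℕ} {i j : Fin n} (hij : L j ≤ L i)
    {o : Fin d → Fin n} (hj : j ∈ tops n d L o) :
    i ∈ tops n d L (fun k => Equiv.swap i j (o k)) ∧
      (tops n d L (fun k => Equiv.swap i j (o k))).card ≤ (tops n d L o).card := by
  rw [mem_tops] at hj
  obtain ⟨⟨k0, hk0⟩, hmax⟩ := hj
  constructor
  · rw [mem_tops]
    refine ⟨⟨k0, by simp [hk0]⟩, fun k => ?_⟩
    have := hmax k
    rw [Equiv.swap_apply_def]
    split_ifs <;> omega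
  · rw [← Finset.card_map (Equiv.swap i j).toEmbedding]
    refine Finset.card_le_card ?_
    intro x hx
    rw [Finset.mem_map] at hx
    obtain ⟨b, hb, rfl⟩ := hx
    rw [mem_tops] at hb ⊢
    obtain ⟨⟨k, hk⟩, hb2⟩ := hb
    have h0 := hb2 k0
    simp only [hk0, Equiv.swap_apply_right] at h0
    refine ⟨⟨k, by simp [← hk]⟩, fun k' => ?_⟩
    have := hmax k'
    simp only [Equiv.coe_toEmbedding]
    rw [Equiv.swap_apply_def]
    split_ifs <;> omega

lemma stepBin_mono (n d : ℕ) (hn : 0 < n) (hd : 0 < d) (L : Fin n → ℕ) (i j : Fin n)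
    (hij : L j ≤ L i) : stepBin n d hn hd L j ≤ stepBin n d hn hd L i := by
  rw [stepBin_apply, stepBin_apply]
  rw [← Equiv.sum_comp (Equiv.arrowCongr (Equiv.refl (Fin d)) (Equiv.swap i j))
    (fun o => ((n : ℝ≥0∞) ^ d)⁻¹ *
      (if i ∈ tops n d L o then ((tops n d L o).card : ℝ≥0∞)⁻¹ else 0))]
  refine Finset.sum_le_sum fun o _ => mul_le_mul_right ?_ _
  by_cases hj : j ∈ tops n d L o
  · obtain ⟨h1, h2⟩ := tops_swap_card hij hj
    have e : (Equiv.arrowCongr (Equiv.refl (Fin d)) (Equiv.swap i j)) o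
        = fun k => Equiv.swap i j (o k) := by
      funext k; simp [Equiv.arrowCongr]
    rw [e, if_pos hj, if_pos h1]
    exact ENNReal.inv_le_inv.2 (by exact_mod_cast h2)
  · simp [hj]

lemma stepBin_lower (n d : ℕ) (hn : 0 < n) (hd : 0 < d) (L : Fin n → ℕ) (i : Fin n) :
    ((n : ℝ≥0∞) ^ d)⁻¹ ≤ stepBin n d hn hd L i := by
  rw [stepBin_apply]
  refine le_trans ?_ (Finset.single_le_sum (fun _ _ => zero_le) (Finset.mem_univ (fun _ => i)))
  have e : tops n d L (fun _ => i) = {i} := by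
    ext b
    rw [mem_tops, Finset.mem_singleton]
    constructor
    · rintro ⟨⟨k, hk⟩, -⟩; exact hk.symm
    · rintro rfl; exact ⟨⟨⟨0, hd⟩, rfl⟩, fun _ => le_rfl⟩
  rw [e]; simp

/-- load difference -/
def diff {n : ℕ} (L : Fin n → ℕ) (i j : Fin n) : ℤ := (L i : ℤ) - (L j : ℤ)

lemma diff_append {n : ℕ} (l : List (Fin n)) (b i j : Fin n) :
    diff (loadsOf n 0 (l ++ [b])) i j =
      diff (loadsOf n 0 l) i j + (if b = i then 1 else 0) - (if b = j then 1 else 0) := by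
  simp only [diff, loadsOf, List.count_append, List.count_singleton]
  simp only [beq_iff_eq]
  split_ifs <;> push_cast <;> ring

lemma step_ineq (n d : ℕ) (hn : 0 < n) (hd : 0 < d) (l : List (Fin n)) (i j : Fin n)
    (hij : i ≠ j) (m : ℕ) (hD : |diff (loadsOf n 0 l) i j| < (n : ℤ) ^ 2) :
    EE (stepBin n d hn hd (loadsOf n 0 l)) (fun b => ENNReal.ofReal
      ((n : ℝ) ^ 4 - (diff (loadsOf n 0 (l ++ [b])) i j : ℝ) ^ 2 + ((n : ℝ) ^ d)⁻¹ * (m + 1 : ℕ)))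
    ≤ ENNReal.ofReal ((n : ℝ) ^ 4 - (diff (loadsOf n 0 l) i j : ℝ) ^ 2 + ((n : ℝ) ^ d)⁻¹ * m) := by
  set L := loadsOf n 0 l with hL
  set D := diff L i j with hDdef
  set p := stepBin n d hn hd L with hp
  set c := ((n : ℝ) ^ d)⁻¹ with hc
  have hc0 : 0 ≤ c := by positivity
  have hfin : ∀ b, p b ≠ ∞ := fun b => PMF.apply_ne_top _ _
  set g : Fin n → ℝ := fun b =>
    (n : ℝ) ^ 4 - (diff (loadsOf n 0 (l ++ [b])) i j : ℝ) ^ 2 + c * (m + 1 : ℕ) with hg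
  have hg0 : ∀ b, 0 ≤ g b := by
    intro b
    have h1 : |diff (loadsOf n 0 (l ++ [b])) i j| ≤ (n : ℤ) ^ 2 := by
      rw [diff_append, ← hL, ← hDdef, abs_le]
      rw [abs_lt] at hD
      constructor <;> split_ifs <;> omega
    have h2 : (diff (loadsOf n 0 (l ++ [b])) i j : ℝ) ^ 2 ≤ ((n : ℝ) ^ 2) ^ 2 := by
      apply sq_le_sq.2
      rw [abs_of_nonneg (by positivity : (0 : ℝ) ≤ (n : ℝ) ^ 2)]
      exact_mod_cast h1
    have h3 : 0 ≤ c * (m + 1 : ℕ) := by positivity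
    simp only [hg]
    nlinarith
  have hgb : ∀ b, g b = ((n : ℝ) ^ 4 - (D : ℝ) ^ 2 + c * (m + 1))
      - (if b = i then 2 * (D : ℝ) + 1 else 0) - (if b = j then 1 - 2 * (D : ℝ) else 0) := by
    intro b
    simp only [hg, diff_append, ← hL, ← hDdef]
    by_cases h1 : b = i
    · have h2 : b ≠ j := by rw [h1]; exact hij
      simp [h1, hij]; ring
    · by_cases h2 : b = j
      · simp [h2, hij.symm]; ring
      · simp [h1, h2]
  have hsum : ∑ b, (p b).toReal = 1 := by
    rw [← ENNReal.toReal_sum (fun b _ => hfin b), ← tsum_fintype (L := .unconditional _), p.tsum_coe]; simp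
  have hE : EE p (fun b => ENNReal.ofReal (g b)) = ENNReal.ofReal (∑ b, (p b).toReal * g b) := by
    unfold EE
    rw [tsum_fintype, ENNReal.ofReal_sum_of_nonneg
      (fun b _ => mul_nonneg ENNReal.toReal_nonneg (hg0 b))]
    refine Finset.sum_congr rfl fun b _ => ?_
    rw [ENNReal.ofReal_mul ENNReal.toReal_nonneg, ENNReal.ofReal_toReal (hfin b)]
  change EE p (fun b => ENNReal.ofReal (g b)) ≤ _
  rw [hE]
  refine ENNReal.ofReal_le_ofReal ?_
  have hval : ∑ b, (p b).toReal * g b = ((n : ℝ) ^ 4 - (D : ℝ) ^ 2 + c * (m + 1))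
      - (p i).toReal * (2 * (D : ℝ) + 1) - (p j).toReal * (1 - 2 * (D : ℝ)) := by
    simp only [hgb, mul_sub, Finset.sum_sub_distrib, ← Finset.sum_mul, hsum]
    simp [mul_ite]
    ring
  rw [hval]
  have hpi : c ≤ (p i).toReal := by
    have := ENNReal.toReal_mono (hfin i) (stepBin_lower n d hn hd L i)
    simpa [hc] using this
  have hpj : 0 ≤ (p j).toReal := ENNReal.toReal_nonneg
  have hDp : 0 ≤ (D : ℝ) * ((p i).toReal - (p j).toReal) := by
    rcases le_total (L j) (L i) with h | h
    · have h1 := ENNReal.toReal_mono (hfin i) (stepBin_mono n d hn hd L i j h)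
      have h2 : (0 : ℤ) ≤ D := by simp only [hDdef, diff]; omega
      have h3 : (0 : ℝ) ≤ D := by exact_mod_cast h2
      exact mul_nonneg h3 (sub_nonneg.2 h1)
    · have h1 := ENNReal.toReal_mono (hfin j) (stepBin_mono n d hn hd L j i h)
      have h2 : D ≤ 0 := by simp only [hDdef, diff]; omega
      have h3 : (D : ℝ) ≤ 0 := by exact_mod_cast h2
      exact mul_nonneg_of_nonpos_of_nonpos h3 (sub_nonpos.2 h1)
  nlinarith

/-- The pair never reached gap `n²` along the history. -/
def bad {n : ℕ} (i j : Fin n) (h : List (Fin n × Equiv.Perm (Fin n))) : Prop :=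
  ∀ s, |diff (trajLoads n 0 h s) i j| < (n : ℤ) ^ 2

lemma bad_of_append {n : ℕ} {i j : Fin n} {h : List (Fin n × Equiv.Perm (Fin n))}
    {x : Fin n × Equiv.Perm (Fin n)} (hb : bad i j (h ++ [x])) : bad i j h := by
  intro s
  have := hb (min s h.length)
  unfold trajLoads at this ⊢
  rw [List.map_append, List.take_append_of_le_length (by simp)] at this
  rcases le_total s h.length with hs | hs
  · rwa [min_eq_left hs] at this
  · rw [min_eq_right hs] at this
    rw [List.take_of_length_le (by simpa using hs)]
    rwa [List.take_of_length_le (by simp)] at this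

lemma bad_last {n : ℕ} {i j : Fin n} {h : List (Fin n × Equiv.Perm (Fin n))}
    (hb : bad i j h) : |diff (loadsOf n 0 (h.map Prod.fst)) i j| < (n : ℤ) ^ 2 := by
  have := hb h.length
  unfold trajLoads at this
  rwa [List.take_of_length_le (by simp)] at this

open Classical in
lemma main_super (n d : ℕ) (hn : 0 < n) (hd : 0 < d) (i j : Fin n) (hij : i ≠ j) (m : ℕ) :
    EE (proc n d hn hd 0 m) (fun h => if bad i j h then ENNReal.ofReal
      ((n : ℝ) ^ 4 - (diff (loadsOf n 0 (h.map Prod.fst)) i j : ℝ) ^ 2 + ((n : ℝ) ^ d)⁻¹ * m)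
      else 0) ≤ ENNReal.ofReal ((n : ℝ) ^ 4) := by
  induction m with
  | zero =>
    rw [proc, EE_pure]
    split_ifs
    · refine ENNReal.ofReal_le_ofReal ?_
      have := sq_nonneg (diff (loadsOf n 0 (([] : List (Fin n × Equiv.Perm (Fin n))).map Prod.fst)) i j : ℝ)
      push_cast
      linarith
    · simp
  | succ m ih =>
    refine le_trans ?_ ih
    rw [proc, EE_bind]
    refine EE_mono _ fun h => ?_
    by_cases hb : bad i j h
    · rw [if_pos hb]
      refine le_trans ?_ (step_ineq n d hn hd (h.map Prod.fst) i j hij m (bad_last hb))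
      rw [EE_bind]
      refine EE_mono _ fun b => ?_
      rw [EE_bind]
      refine le_trans (EE_mono _ fun σ => ?_) (EE_const _ _).le
      rw [EE_pure]
      split_ifs
      · simp
      · exact zero_le
    · rw [if_neg hb, EE_bind]
      refine le_trans (EE_mono _ fun b => ?_) (EE_const _ 0).le
      rw [EE_bind]
      refine le_trans (EE_mono _ fun σ => ?_) (EE_const _ 0).le
      rw [EE_pure, if_neg (fun h' => hb (bad_of_append h'))]

open Classical in
lemma bad_prob (n d : ℕ) (hn : 0 < n) (hd : 0 < d) (i j : Fin n) (hij : i ≠ j) (m : ℕ)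
    (hm : 0 < m) :
    EE (proc n d hn hd 0 m) (fun h => if bad i j h then 1 else 0) ≤
      ENNReal.ofReal ((n : ℝ) ^ 4 / (((n : ℝ) ^ d)⁻¹ * m)) := by
  have hn' : (0 : ℝ) < n := by exact_mod_cast hn
  have hm' : (0 : ℝ) < m := by exact_mod_cast hm
  have hpos : 0 < ((n : ℝ) ^ d)⁻¹ * m := by positivity
  rw [ENNReal.ofReal_div_of_pos hpos]
  rw [ENNReal.le_div_iff_mul_le (Or.inl (ENNReal.ofReal_pos.2 hpos).ne') (Or.inl ENNReal.ofReal_ne_top)]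
  refine le_trans ?_ (main_super n d hn hd i j hij m)
  rw [← EE_mul]
  refine EE_mono _ fun h => ?_
  split_ifs with hb
  · rw [one_mul]
    refine ENNReal.ofReal_le_ofReal ?_
    have h1 := bad_last hb
    have h2 : (diff (loadsOf n 0 (h.map Prod.fst)) i j : ℝ) ^ 2 ≤ ((n : ℝ) ^ 2) ^ 2 := by
      apply sq_le_sq.2
      rw [abs_of_nonneg (by positivity : (0 : ℝ) ≤ (n : ℝ) ^ 2)]
      exact_mod_cast h1.le
    nlinarith
  · simp

lemma proc_length (n d : ℕ) (hn : 0 < n) (hd : 0 < d) (m : ℕ) :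
    ∀ h ∈ (proc n d hn hd 0 m).support, h.length = m := by
  induction m with
  | zero => intro h hh; rw [proc, PMF.mem_support_pure_iff] at hh; simp [hh]
  | succ m ih =>
    intro h hh
    rw [proc, PMF.mem_support_bind_iff] at hh
    obtain ⟨h', hh', hh⟩ := hh
    rw [PMF.mem_support_bind_iff] at hh
    obtain ⟨b, -, hh⟩ := hh
    rw [PMF.mem_support_bind_iff] at hh
    obtain ⟨σ, -, hh⟩ := hh
    rw [PMF.mem_support_pure_iff] at hh
    simp [hh, ih h' hh']

lemma EE_indicator {α : Type*} (p : PMF α) (S : Set α) :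
    EE p (S.indicator fun _ => 1) = p.toOuterMeasure S := by
  rw [PMF.toOuterMeasure_apply]
  unfold EE
  refine tsum_congr fun a => ?_
  by_cases h : a ∈ S <;> simp [h]

end Unfair

open Unfair in
/-- **Lemma 1 (initialization).** For all integers `n ≥ 2`, `d ≥ 2`, after `n^(3d+12)`
balls have been placed under UNFAIR (from empty bins), with probability at least
`1 − O(n^(−d−1))` every pair of distinct bins has, at some time `s ≤ n^(3d+12)`,
achieved a load gap of at least `n²`. -/
theorem unfair_initialization (d : ℕ) (hd2 : 2 ≤ d) :
    ∃ C : ℝ, 0 < C ∧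
      ∀ n : ℕ, ∀ hn2 : 2 ≤ n,
        1 - C / (n : ℝ) ^ (d + 1) ≤
          prob (proc n d (by omega) (by omega) 0 (n ^ (3 * d + 12)))
            {h | ∀ i j : Fin n, i ≠ j → ∃ s : ℕ, s ≤ n ^ (3 * d + 12) ∧
              (n : ℤ) ^ 2 ≤ |(trajLoads n 0 h s i : ℤ) - (trajLoads n 0 h s j : ℤ)|} := by
  classical
  refine ⟨1, one_pos, fun n hn2 => ?_⟩
  have hn : 0 < n := by omega
  have hd : 0 < d := by omega
  set N := n ^ (3 * d + 12) with hN
  have hNpos : 0 < N := by positivity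
  set S : Set (List (Fin n × Equiv.Perm (Fin n))) :=
    {h | ∀ i j : Fin n, i ≠ j → ∃ s : ℕ, s ≤ N ∧
      (n : ℤ) ^ 2 ≤ |(trajLoads n 0 h s i : ℤ) - (trajLoads n 0 h s j : ℤ)|} with hS
  set p := proc n d hn hd 0 N with hp
  change 1 - 1 / (n : ℝ) ^ (d + 1) ≤ (p.toOuterMeasure S).toReal
  set ε : ℝ := (n : ℝ) ^ 4 / (((n : ℝ) ^ d)⁻¹ * N) with hε
  have hn1 : (1 : ℝ) ≤ n := by exact_mod_cast hn
  have hn0 : (0 : ℝ) < n := by linarith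
  have hε0 : 0 ≤ ε := by positivity
  set T : Finset (Fin n × Fin n) := Finset.univ.filter fun q => q.1 ≠ q.2 with hT
  have key : (1 : ENNReal) ≤ p.toOuterMeasure S + ∑ q ∈ T,
      EE p (fun h => if bad q.1 q.2 h then 1 else 0) := by
    rw [← EE_indicator, ← EE_sum, ← EE_add]
    refine le_trans (EE_const p 1).ge (EE_mono_supp p fun h hh => ?_)
    have hlen := proc_length n d hn hd N h hh
    by_cases hmem : h ∈ S
    · simp [hmem]
    · have hmem' := hmem
      simp only [hS, Set.mem_ofPred_eq, not_forall, not_exists, not_and, not_le] at hmem'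
      obtain ⟨i, j, hij, hbad⟩ := hmem'
      have hb : bad i j h := by
        intro s
        rcases le_total s N with hs | hs
        · exact hbad s hs
        · have := hbad N le_rfl
          have e : trajLoads n 0 h s = trajLoads n 0 h N := by
            unfold trajLoads
            rw [List.take_of_length_le (by simp [hlen, hs]),
              List.take_of_length_le (by simp [hlen])]
          rw [e]; exact this
      have hq : (i, j) ∈ T := by simp [hT, hij]
      refine le_trans ?_ le_add_self
      refine le_trans ?_ (Finset.single_le_sum (fun _ _ => zero_le) hq)
      simp [hb]
  have key2 : (1 : ENNReal) ≤ p.toOuterMeasure S + ENNReal.ofReal ((n : ℝ) ^ 2 * ε) := by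
    refine key.trans (add_le_add le_rfl ?_)
    calc _ ≤ ∑ q ∈ T, ENNReal.ofReal ε := Finset.sum_le_sum fun q hq =>
            bad_prob n d hn hd q.1 q.2 (by simpa [hT] using hq) N hNpos
      _ ≤ ∑ q : Fin n × Fin n, ENNReal.ofReal ε :=
            Finset.sum_le_sum_of_subset (Finset.filter_subset _ _)
      _ = ENNReal.ofReal ((n : ℝ) ^ 2 * ε) := by
            rw [ENNReal.ofReal_mul (by positivity)]
            simp [sq]
  have hfin : p.toOuterMeasure S ≠ ⊤ := by
    rw [← EE_indicator]
    refine ne_top_of_le_ne_top ENNReal.one_ne_top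
      (le_trans (EE_mono p (g := fun _ => 1) fun h => ?_) (EE_const p 1).le)
    exact Set.indicator_le_self' (fun _ _ => zero_le) h
  have key3 : (1 : ℝ) ≤ (p.toOuterMeasure S).toReal + (n : ℝ) ^ 2 * ε := by
    have := ENNReal.toReal_mono (ENNReal.add_ne_top.2 ⟨hfin, ENNReal.ofReal_ne_top⟩) key2
    rwa [ENNReal.toReal_add hfin ENNReal.ofReal_ne_top, ENNReal.toReal_one,
      ENNReal.toReal_ofReal (by positivity)] at this
  have hb : (n : ℝ) ^ 2 * ε ≤ 1 / (n : ℝ) ^ (d + 1) := by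
    have e : (n : ℝ) ^ 2 * ε = 1 / (n : ℝ) ^ (2 * d + 6) := by
      rw [hε, hN]
      push_cast
      field_simp
      ring
    rw [e]
    exact one_div_le_one_div_of_le (by positivity) (pow_le_pow_right₀ hn1 (by omega))
  linarith
end

section
/- For any starting configuration of loads of n bins, any integers d ≥ 2 and n ≥ 2, and any real δ > 0: if bin B_j has at least δ·n/(d−1) more balls than bin B_i, then the probability that at any future time (i.e., after any number m of additional balls is placed) bin B_j's load becomes strictly smaller than bin B_i's load under UNFAIR is at most e^(−δ). -/
namespace Unfair

/-- The set of most loaded bins among the options. -/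
def amax (n d : ℕ) (L : Fin n → ℕ) (opts : Fin d → Fin n) : Finset (Fin n) :=
  (Finset.univ.image opts).filter fun b => ∀ k, L (opts k) ≤ L b

theorem mem_amax {n d : ℕ} {L : Fin n → ℕ} {opts : Fin d → Fin n} {b : Fin n} :
    b ∈ amax n d L opts ↔ (∃ k, opts k = b) ∧ ∀ k, L (opts k) ≤ L b := by
  simp [amax]

theorem amax_nonempty {n d : ℕ} (hd : 0 < d) (L : Fin n → ℕ) (opts : Fin d → Fin n) :
    (amax n d L opts).Nonempty := by
  haveI : NeZero d := ⟨hd.ne'⟩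
  obtain ⟨k, hk, hmax⟩ := Finset.exists_max_image Finset.univ (fun k => L (opts k))
    Finset.univ_nonempty
  exact ⟨opts k, mem_amax.2 ⟨⟨k, rfl⟩, fun k' => hmax k' (Finset.mem_univ _)⟩⟩

/-- Unnormalised weight of a bin. -/
noncomputable def wt (n d : ℕ) (L : Fin n → ℕ) (b : Fin n) : ℝ :=
  ∑ opts : Fin d → Fin n,
    if b ∈ amax n d L opts then ((amax n d L opts).card : ℝ)⁻¹ else 0

theorem stepBin_toReal (n d : ℕ) (hn : 0 < n) (hd : 0 < d) (L : Fin n → ℕ) (b : Fin n) :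
    (stepBin n d hn hd L b).toReal = ((n : ℝ) ^ d)⁻¹ * wt n d L b := by
  haveI : NeZero n := ⟨hn.ne'⟩
  haveI : NeZero d := ⟨hd.ne'⟩
  unfold stepBin wt
  rw [PMF.bind_apply, tsum_fintype, ENNReal.toReal_sum, Finset.mul_sum]
  · refine Finset.sum_congr rfl fun opts _ => ?_
    rw [ENNReal.toReal_mul, PMF.uniformOfFintype_apply, PMF.uniformOfFinset_apply]
    have e : ((Finset.univ.image opts).filter fun b => ∀ k, L (opts k) ≤ L b)
        = amax n d L opts := rfl
    simp only [e]
    congr 1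
    · simp
    · split_ifs <;> simp
  · intro opts _
    exact ENNReal.mul_ne_top (PMF.apply_ne_top _ _) (PMF.apply_ne_top _ _)

theorem wt_symm (n d : ℕ) (L : Fin n → ℕ) (b b' : Fin n) (h : L b = L b') :
    wt n d L b = wt n d L b' := by
  unfold wt
  have hL : ∀ x, L (Equiv.swap b b' x) = L x := by
    intro x
    rcases eq_or_ne x b with rfl | h1
    · simp [h]
    rcases eq_or_ne x b' with rfl | h2
    · simp [h]
    rw [Equiv.swap_apply_of_ne_of_ne h1 h2]
  have hA : ∀ opts : Fin d → Fin n, amax n d L (fun k => Equiv.swap b b' (opts k))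
      = (amax n d L opts).map (Equiv.swap b b').toEmbedding := by
    intro opts
    ext x
    rw [Finset.mem_map_equiv, mem_amax, mem_amax]
    simp only [hL, Equiv.symm_swap]
    constructor
    · rintro ⟨⟨k, rfl⟩, h2⟩
      exact ⟨⟨k, by simp⟩, by simpa [hL] using h2⟩
    · rintro ⟨⟨k, hk⟩, h2⟩
      exact ⟨⟨k, by simp [hk]⟩, by simpa [hL] using h2⟩
  refine Fintype.sum_equiv (Equiv.arrowCongr (Equiv.refl _) (Equiv.swap b b')) _ _ ?_
  intro opts
  have e : (Equiv.arrowCongr (Equiv.refl (Fin d)) (Equiv.swap b b')) opts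
      = fun k => Equiv.swap b b' (opts k) := by
    ext k; simp
  rw [e, hA, Finset.card_map]
  simp only [Finset.mem_map_equiv, Equiv.symm_swap, Equiv.swap_apply_right]

theorem count_le {n : ℕ} (d : ℕ) (P : Fin n → Prop) [DecidablePred P] :
    (∑ opts : Fin d → Fin n, if ∀ k, P (opts k) then (1 : ℝ) else 0)
      = ((Finset.univ.filter P).card : ℝ) ^ d := by
  rw [Finset.sum_boole]
  have : (Finset.univ.filter fun opts : Fin d → Fin n => ∀ k, P (opts k))
      = Fintype.piFinset (fun _ : Fin d => Finset.univ.filter P) := by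
    ext o; simp [Fintype.mem_piFinset]
  rw [this, Fintype.card_piFinset]
  simp

theorem wt_group (n d : ℕ) (hd : 0 < d) (L : Fin n → ℕ) (v : ℕ) :
    ∑ b ∈ Finset.univ.filter (fun b => L b = v), wt n d L b
      = ((Finset.univ.filter (fun b => L b ≤ v)).card : ℝ) ^ d
        - ((Finset.univ.filter (fun b => L b < v)).card : ℝ) ^ d := by
  unfold wt
  rw [Finset.sum_comm, ← count_le, ← count_le, ← Finset.sum_sub_distrib]
  refine Finset.sum_congr rfl fun opts _ => ?_
  obtain ⟨c, hc⟩ := amax_nonempty hd L opts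
  have hcard : ((amax n d L opts).card : ℝ) ≠ 0 := by
    have := Finset.card_pos.2 ⟨c, hc⟩
    positivity
  obtain ⟨⟨k0, hk0⟩, hmax⟩ := mem_amax.1 hc
  have hlev : ∀ b ∈ amax n d L opts, L b = L c := by
    intro b hb
    obtain ⟨⟨k1, hk1⟩, hmax1⟩ := mem_amax.1 hb
    have h1 := hmax k1
    have h2 := hmax1 k0
    rw [hk1] at h1
    rw [hk0] at h2
    omega
  rw [← Finset.sum_filter, Finset.sum_const, nsmul_eq_mul]
  have hle : (∀ k, L (opts k) ≤ v) ↔ L c ≤ v :=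
    ⟨fun h => hk0 ▸ h k0, fun h k => (hmax k).trans h⟩
  have hlt : (∀ k, L (opts k) < v) ↔ L c < v :=
    ⟨fun h => hk0 ▸ h k0, fun h k => (hmax k).trans_lt h⟩
  rw [if_congr hle rfl rfl, if_congr hlt rfl rfl]
  by_cases hv : L c = v
  · have : (Finset.univ.filter (fun b => L b = v)).filter (fun b => b ∈ amax n d L opts)
        = amax n d L opts := by
      ext b
      simp only [Finset.mem_filter, Finset.mem_univ, true_and, and_iff_right_iff_imp]
      intro hb; rw [hlev b hb, hv]
    rw [this, mul_inv_cancel₀ hcard]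
    simp [hv]
  · have : (Finset.univ.filter (fun b => L b = v)).filter (fun b => b ∈ amax n d L opts)
        = ∅ := by
      ext b
      simp only [Finset.mem_filter, Finset.mem_univ, true_and, Finset.notMem_empty, iff_false]
      rintro ⟨h1, hb⟩; exact hv ((hlev b hb).symm.trans h1)
    rw [this]
    have : L c ≤ v ↔ L c < v := by omega
    simp [this]

theorem wt_eq (n d : ℕ) (hd : 0 < d) (L : Fin n → ℕ) (b : Fin n) :
    wt n d L b = ∑ s ∈ Finset.range d,
      ((Finset.univ.filter (fun x => L x ≤ L b)).card : ℝ) ^ s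
        * ((Finset.univ.filter (fun x => L x < L b)).card : ℝ) ^ (d - 1 - s) := by
  have h := wt_group n d hd L (L b)
  rw [← geom_sum₂_mul, Finset.sum_congr rfl (g := fun _ => wt n d L b)
    (fun x hx => wt_symm n d L x b (by simpa using hx)), Finset.sum_const, nsmul_eq_mul] at h
  have hc : (Finset.univ.filter (fun x => L x ≤ L b)).card
      = (Finset.univ.filter (fun x => L x < L b)).card
        + (Finset.univ.filter (fun x => L x = L b)).card := by
    rw [← Finset.card_union_of_disjoint]
    · congr 1; ext x; simp [le_iff_lt_or_eq]
    · rw [Finset.disjoint_filter]; intro x _ h1; omega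
  have hpos : 0 < (Finset.univ.filter (fun x => L x = L b)).card :=
    Finset.card_pos.2 ⟨b, by simp⟩
  have hpos' : ((Finset.univ.filter (fun x => L x = L b)).card : ℝ) ≠ 0 := by positivity
  have e : ((Finset.univ.filter (fun x => L x ≤ L b)).card : ℝ)
      - ((Finset.univ.filter (fun x => L x < L b)).card : ℝ)
      = ((Finset.univ.filter (fun x => L x = L b)).card : ℝ) := by
    rw [hc]; push_cast; ring
  rw [e, mul_comm] at h
  exact mul_right_cancel₀ hpos' h

theorem wt_ratio (n d : ℕ) (hn : 2 ≤ n) (hd : 2 ≤ d) (L : Fin n → ℕ) (i j : Fin n)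
    (hij : L i < L j) :
    Real.exp (((d : ℝ) - 1) / n) * wt n d L i ≤ wt n d L j := by
  rw [wt_eq n d (by omega), wt_eq n d (by omega)]
  have h1 : (Finset.univ.filter (fun x => L x < L i)).card
      < (Finset.univ.filter (fun x => L x ≤ L i)).card :=
    Finset.card_lt_card (by
      rw [Finset.ssubset_iff_of_subset]
      · exact ⟨i, by simp, by simp⟩
      · intro x; simp; omega)
  have h2 : (Finset.univ.filter (fun x => L x ≤ L i)).card
      ≤ (Finset.univ.filter (fun x => L x < L j)).card :=
    Finset.card_le_card (by intro x; simp; omega)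
  have h3 : (Finset.univ.filter (fun x => L x < L j)).card
      < (Finset.univ.filter (fun x => L x ≤ L j)).card :=
    Finset.card_lt_card (by
      rw [Finset.ssubset_iff_of_subset]
      · exact ⟨j, by simp, by simp⟩
      · intro x; simp; omega)
  have h4 : (Finset.univ.filter (fun x => L x ≤ L j)).card ≤ n := by
    simpa using Finset.card_le_univ (Finset.univ.filter (fun x => L x ≤ L j))
  generalize (Finset.univ.filter (fun x => L x < L i)).card = a at *
  generalize (Finset.univ.filter (fun x => L x ≤ L i)).card = a1 at *
  generalize (Finset.univ.filter (fun x => L x < L j)).card = k at *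
  generalize (Finset.univ.filter (fun x => L x ≤ L j)).card = k1 at *
  have hn0 : (0 : ℝ) < n := by positivity
  have hn2 : (2 : ℝ) ≤ n := by exact_mod_cast hn
  have h1' : (a : ℝ) + 1 ≤ a1 := by exact_mod_cast h1
  have h2' : (a1 : ℝ) ≤ k := by exact_mod_cast h2
  have h3' : (k : ℝ) + 1 ≤ k1 := by exact_mod_cast h3
  have h4' : (k1 : ℝ) ≤ n := by exact_mod_cast h4
  have ha0 : (0 : ℝ) ≤ a := by positivity
  set c := Real.exp (1 / (n : ℝ)) with hc
  have hc0 : 0 < c := Real.exp_pos _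
  have hcn : c * (n - 1) ≤ n := by
    have := Real.add_one_le_exp (-(1 / (n : ℝ)))
    rw [Real.exp_neg, ← hc] at this
    have h5 : c * (-(1 / (n : ℝ)) + 1) ≤ 1 := by
      calc _ ≤ c * c⁻¹ := by gcongr
        _ = 1 := mul_inv_cancel₀ hc0.ne'
    have h6 : c * (n - 1) = (c * (-(1 / (n : ℝ)) + 1)) * n := by field_simp; ring
    rw [h6]; nlinarith
  have key : ∀ x : ℝ, 0 ≤ x → x ≤ n - 1 → c * x ≤ x + 1 := by
    intro x hx hxn
    have : c * x * (n - 1) ≤ (x + 1) * (n - 1) := by nlinarith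
    exact le_of_mul_le_mul_right this (by linarith)
  have hA : c * a ≤ k := (key a ha0 (by linarith)).trans (by linarith)
  have hA1 : c * a1 ≤ k1 := (key a1 (by linarith) (by linarith)).trans (by linarith)
  have hexp : Real.exp (((d : ℝ) - 1) / n) = c ^ (d - 1) := by
    rw [hc, ← Real.exp_nat_mul, Nat.cast_sub (by omega)]
    congr 1; push_cast; ring
  rw [hexp, Finset.mul_sum]
  refine Finset.sum_le_sum fun s hs => ?_
  have hs' : s < d := Finset.mem_range.1 hs
  have e : c ^ (d - 1) = c ^ s * c ^ (d - 1 - s) := by rw [← pow_add]; congr 1; omega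
  calc _ = (c * a1) ^ s * (c * a) ^ (d - 1 - s) := by rw [e, mul_pow, mul_pow]; ring
    _ ≤ _ := by gcongr

/-- The potential. -/
noncomputable def pot (c : ℝ) (g : ℤ) : ℝ := Real.exp (-(c * (max g 0 : ℤ)))

theorem pot_le_one {c : ℝ} (hc : 0 < c) (g : ℤ) : pot c g ≤ 1 := by
  unfold pot
  rw [Real.exp_le_one_iff]
  have : (0 : ℝ) ≤ (max g 0 : ℤ) := by exact_mod_cast le_max_right g 0
  nlinarith

theorem pot_of_nonpos (c : ℝ) {g : ℤ} (hg : g ≤ 0) : pot c g = 1 := by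
  unfold pot
  rw [max_eq_right hg]; simp

theorem pot_of_nonneg (c : ℝ) {g : ℤ} (hg : 0 ≤ g) : pot c g = Real.exp (-(c * g)) := by
  unfold pot
  rw [max_eq_left hg]

theorem pot_step {c p q : ℝ} (hc : 0 < c) (hq : 0 ≤ q)
    (g : ℤ) (h : 1 ≤ g → Real.exp c * p ≤ q) :
    p * (pot c (g - 1) - pot c g) + q * (pot c (g + 1) - pot c g) ≤ 0 := by
  by_cases hg : 1 ≤ g
  · have h := h hg
    rw [pot_of_nonneg c (by omega : 0 ≤ g - 1), pot_of_nonneg c (by omega : 0 ≤ g),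
      pot_of_nonneg c (by omega : 0 ≤ g + 1)]
    have e1 : Real.exp (-(c * ((g - 1 : ℤ) : ℝ)))
        = Real.exp c * Real.exp c * Real.exp (-(c * ((g + 1 : ℤ) : ℝ))) := by
      rw [← Real.exp_add, ← Real.exp_add]; congr 1; push_cast; ring
    have e2 : Real.exp (-(c * (g : ℝ)))
        = Real.exp c * Real.exp (-(c * ((g + 1 : ℤ) : ℝ))) := by
      rw [← Real.exp_add]; congr 1; push_cast; ring
    rw [e1, e2]
    have hE := Real.exp_pos (-(c * ((g + 1 : ℤ) : ℝ)))
    generalize Real.exp (-(c * ((g + 1 : ℤ) : ℝ))) = E at *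
    have hr : 1 ≤ Real.exp c := Real.one_le_exp hc.le
    generalize Real.exp c = r at *
    have : 0 ≤ E * (r - 1) * (q - r * p) :=
      mul_nonneg (mul_nonneg hE.le (by linarith)) (by linarith)
    nlinarith
  · rw [pot_of_nonpos c (by omega : g - 1 ≤ 0), pot_of_nonpos c (by omega : g ≤ 0)]
    have := pot_le_one hc (g + 1)
    nlinarith

/-- The gap between two bins. -/
def gap {n : ℕ} (i j : Fin n) (L : Fin n → ℕ) : ℤ := (L j : ℤ) - L i

theorem step_super (n d : ℕ) (hn : 2 ≤ n) (hd : 2 ≤ d) (hn' : 0 < n) (hd' : 0 < d)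
    (L : Fin n → ℕ) (i j : Fin n)
    (hij : i ≠ j) (L' : Fin n → Fin n → ℕ)
    (hL' : ∀ b x, L' b x = L x + if b = x then 1 else 0) :
    ∑ b, (stepBin n d hn' hd' L b).toReal * pot (((d : ℝ) - 1) / n) (gap i j (L' b))
      ≤ pot (((d : ℝ) - 1) / n) (gap i j L) := by
  set c := ((d : ℝ) - 1) / n with hc
  have hc0 : 0 < c := by
    have h1 : (2 : ℝ) ≤ d := by exact_mod_cast hd
    have h2 : (2 : ℝ) ≤ n := by exact_mod_cast hn
    apply div_pos <;> linarith
  have hsum : ∑ b, (stepBin n d hn' hd' L b).toReal = 1 := by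
    rw [← ENNReal.toReal_sum (fun b _ => PMF.apply_ne_top _ _), ← tsum_fintype (L := .unconditional _), PMF.tsum_coe]
    rfl
  have hdiff : ∑ b, (stepBin n d hn' hd' L b).toReal *
      (pot c (gap i j (L' b)) - pot c (gap i j L)) ≤ 0 := by
    rw [← Finset.sum_subset (Finset.subset_univ {i, j}), Finset.sum_pair hij]
    · have hi : gap i j (L' i) = gap i j L - 1 := by
        simp [gap, hL', hij]; ring
      have hj : gap i j (L' j) = gap i j L + 1 := by
        simp [gap, hL', hij.symm]; ring
      rw [hi, hj]
      refine pot_step hc0 ENNReal.toReal_nonneg _ fun hg => ?_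
      rw [stepBin_toReal, stepBin_toReal]
      have := wt_ratio n d hn hd L i j (by unfold gap at hg; omega)
      rw [← hc] at this
      rw [mul_left_comm]
      gcongr
    · intro b _ hb
      simp only [Finset.mem_insert, Finset.mem_singleton, not_or] at hb
      have : gap i j (L' b) = gap i j L := by
        simp [gap, hL', hb.1, hb.2]
      rw [this]; ring
  simp only [mul_sub, Finset.sum_sub_distrib, ← Finset.sum_mul, hsum, one_mul] at hdiff
  linarith

/-- Expectation of an extended nonnegative function. -/
noncomputable def ex {α : Type*} (p : PMF α) (f : α → ENNReal) : ENNReal := ∑' a, p a * f a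

theorem ex_pure {α : Type*} (a : α) (f : α → ENNReal) : ex (PMF.pure a) f = f a := by
  unfold ex
  rw [tsum_eq_single a]
  · simp
  · intro b hb; simp [PMF.pure_apply, hb]

theorem ex_bind {α β : Type*} (p : PMF α) (q : α → PMF β) (f : β → ENNReal) :
    ex (p.bind q) f = ex p fun a => ex (q a) f := by
  unfold ex
  simp only [PMF.bind_apply, ← ENNReal.tsum_mul_right, ← ENNReal.tsum_mul_left]
  rw [ENNReal.tsum_comm]
  simp only [mul_assoc]

theorem ex_mono {α : Type*} (p : PMF α) {f g : α → ENNReal} (h : ∀ a, f a ≤ g a) :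
    ex p f ≤ ex p g :=
  ENNReal.tsum_le_tsum fun a => by gcongr; exact h a

theorem ex_const {α : Type*} (p : PMF α) (c : ENNReal) : ex p (fun _ => c) = c := by
  unfold ex
  rw [ENNReal.tsum_mul_right, PMF.tsum_coe, one_mul]

/-- The bad event: at some time bin `j` is below bin `i`. -/
def Bad {n : ℕ} (init : Fin n → ℕ) (i j : Fin n) (h : List (Fin n × Equiv.Perm (Fin n))) :
    Prop := ∃ s : ℕ, trajLoads n init h s j < trajLoads n init h s i

open Classical in
/-- The stopped potential along a history. -/
noncomputable def stopped {n : ℕ} (c : ℝ) (init : Fin n → ℕ) (i j : Fin n)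
    (h : List (Fin n × Equiv.Perm (Fin n))) : ENNReal :=
  if Bad init i j h then 1
  else ENNReal.ofReal (pot c (gap i j (loadsOf n init (h.map Prod.fst))))

theorem stopped_snoc {n : ℕ} {c : ℝ} (hc : 0 < c) (init : Fin n → ℕ) (i j : Fin n)
    (h : List (Fin n × Equiv.Perm (Fin n))) (hb : ¬ Bad init i j h)
    (x : Fin n × Equiv.Perm (Fin n)) :
    stopped c init i j (h ++ [x])
      ≤ ENNReal.ofReal (pot c (gap i j (loadsOf n init (h.map Prod.fst ++ [x.1])))) := by
  unfold stopped
  split_ifs with h1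
  · obtain ⟨s, hs⟩ := h1
    by_cases hsl : s ≤ h.length
    · exfalso
      apply hb
      refine ⟨s, ?_⟩
      simpa [trajLoads, List.take_append_of_le_length, hsl] using hs
    · have hs2 : trajLoads n init (h ++ [x]) s = loadsOf n init (h.map Prod.fst ++ [x.1]) := by
        unfold trajLoads
        rw [List.take_of_length_le]
        · simp
        · simp; omega
      rw [hs2] at hs
      rw [pot_of_nonpos c (by unfold gap; omega)]
      simp
  · simp

theorem stopped_step (n d : ℕ) (hn : 2 ≤ n) (hd : 2 ≤ d) (hn' : 0 < n) (hd' : 0 < d)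
    (init : Fin n → ℕ) (i j : Fin n) (hij : i ≠ j)
    (h : List (Fin n × Equiv.Perm (Fin n))) :
    (ex (stepBin n d hn' hd' (loadsOf n init (h.map Prod.fst))) fun b =>
      ex (rankPMF n (loadsOf n init (h.map Prod.fst ++ [b]))) fun σ =>
        stopped (((d : ℝ) - 1) / n) init i j (h ++ [(b, σ)]))
      ≤ stopped (((d : ℝ) - 1) / n) init i j h := by
  have hc0 : 0 < ((d : ℝ) - 1) / n := by
    have h1 : (2 : ℝ) ≤ d := by exact_mod_cast hd
    have h2 : (2 : ℝ) ≤ n := by exact_mod_cast hn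
    apply div_pos <;> linarith
  have hle1 : ∀ h, stopped (((d : ℝ) - 1) / n) init i j h ≤ 1 := by
    intro h; unfold stopped
    split_ifs
    · exact le_rfl
    · exact ENNReal.ofReal_le_one.2 (pot_le_one hc0 _)
  by_cases hb : Bad init i j h
  · have e : stopped (((d : ℝ) - 1) / n) init i j h = 1 := by simp [stopped, hb]
    rw [e]
    refine (ex_mono _ fun b => (ex_mono _ fun σ => hle1 _).trans_eq (ex_const _ 1)).trans_eq
      (ex_const _ 1)
  · have e : stopped (((d : ℝ) - 1) / n) init i j h
        = ENNReal.ofReal (pot (((d : ℝ) - 1) / n)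
          (gap i j (loadsOf n init (h.map Prod.fst)))) := by simp [stopped, hb]
    rw [e]
    have hstep : ∀ b, (ex (rankPMF n (loadsOf n init (h.map Prod.fst ++ [b]))) fun σ =>
        stopped (((d : ℝ) - 1) / n) init i j (h ++ [(b, σ)]))
        ≤ ENNReal.ofReal (pot (((d : ℝ) - 1) / n)
          (gap i j (loadsOf n init (h.map Prod.fst ++ [b])))) := fun b =>
      (ex_mono _ fun σ => stopped_snoc hc0 init i j h hb (b, σ)).trans
        (ex_const _ _).le
    refine (ex_mono _ hstep).trans ?_
    have hs := step_super n d hn hd hn' hd' (loadsOf n init (h.map Prod.fst)) i j hij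
      (fun b => loadsOf n init (h.map Prod.fst ++ [b])) (by
        intro b x
        simp [loadsOf, List.count_append, List.count_singleton, add_assoc])
    refine le_trans (le_of_eq ?_) (ENNReal.ofReal_le_ofReal hs)
    unfold ex
    rw [tsum_fintype, ENNReal.ofReal_sum_of_nonneg]
    · refine Finset.sum_congr rfl fun b _ => ?_
      rw [ENNReal.ofReal_mul ENNReal.toReal_nonneg, ENNReal.ofReal_toReal (PMF.apply_ne_top _ _)]
    · intro b _
      exact mul_nonneg ENNReal.toReal_nonneg (Real.exp_pos _).le

theorem ex_proc_le (n d : ℕ) (hn : 2 ≤ n) (hd : 2 ≤ d) (hn' : 0 < n) (hd' : 0 < d)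
    (init : Fin n → ℕ) (i j : Fin n) (hij : i ≠ j) (m : ℕ) :
    ex (proc n d hn' hd' init m) (stopped (((d : ℝ) - 1) / n) init i j)
      ≤ stopped (((d : ℝ) - 1) / n) init i j [] := by
  induction m with
  | zero => rw [proc, ex_pure]
  | succ m ih =>
    rw [proc, ex_bind]
    refine le_trans (ex_mono _ fun h => ?_) ih
    simp only [ex_bind, ex_pure]
    exact stopped_step n d hn hd hn' hd' init i j hij h

end Unfair

open Unfair in
/-- **Gambler's-ruin theorem (Theorem 4.3 of the companion paper).** For any starting
configuration `init` of the `n ≥ 2` bins, any `d ≥ 2` and any real `δ > 0`: if bin `j`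
has at least `δ·n/(d−1)` more balls than bin `i`, then the probability that at any
future time (after any number `m` of further balls is placed under UNFAIR) bin `j`'s
load becomes strictly smaller than bin `i`'s load is at most `e^(−δ)`. -/
theorem unfair_gamblers_ruin (n d : ℕ) (hn2 : 2 ≤ n) (hd2 : 2 ≤ d)
    (init : Fin n → ℕ) (i j : Fin n) (δ : ℝ) (hδ : 0 < δ)
    (hgap : (init i : ℝ) + δ * n / ((d : ℝ) - 1) ≤ init j) :
    ∀ m : ℕ,
      prob (proc n d (by omega) (by omega) init m)
        {h | ∃ s : ℕ, s ≤ m ∧ trajLoads n init h s j < trajLoads n init h s i}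
      ≤ Real.exp (-δ) := by
  intro m
  have hd2' : (2 : ℝ) ≤ d := by exact_mod_cast hd2
  have hn2' : (2 : ℝ) ≤ n := by exact_mod_cast hn2
  have hq : 0 < δ * n / ((d : ℝ) - 1) :=
    div_pos (mul_pos hδ (by linarith)) (by linarith)
  have hij : i ≠ j := by
    rintro rfl
    linarith
  have hlt : init i < init j := by
    have : (init i : ℝ) < init j := by linarith
    exact_mod_cast this
  have hmain := ex_proc_le n d hn2 hd2 (by omega) (by omega) init i j hij m
  have h0 : stopped (((d : ℝ) - 1) / n) init i j [] ≤ ENNReal.ofReal (Real.exp (-δ)) := by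
    have hnb : ¬ Bad init i j [] := by
      rintro ⟨s, hs⟩
      simp [trajLoads, loadsOf] at hs
      omega
    simp only [stopped, hnb, if_false]
    apply ENNReal.ofReal_le_ofReal
    rw [pot_of_nonneg _ (by simp [gap, loadsOf]; omega), Real.exp_le_exp, neg_le_neg_iff]
    have e : δ = ((d : ℝ) - 1) / n * (δ * n / ((d : ℝ) - 1)) := by
      have : (d : ℝ) - 1 ≠ 0 := by linarith
      have : (n : ℝ) ≠ 0 := by linarith
      field_simp
    calc δ = ((d : ℝ) - 1) / n * (δ * n / ((d : ℝ) - 1)) := e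
      _ ≤ _ := by
        apply mul_le_mul_of_nonneg_left
        · simp [gap, loadsOf]; linarith
        · apply div_nonneg <;> linarith
  unfold prob
  refine ENNReal.toReal_le_of_le_ofReal (Real.exp_pos _).le (le_trans ?_ (hmain.trans h0))
  rw [PMF.toOuterMeasure_apply]
  unfold ex
  refine ENNReal.tsum_le_tsum fun h => ?_
  by_cases hh : h ∈ {h | ∃ s : ℕ, s ≤ m ∧ trajLoads n init h s j < trajLoads n init h s i}
  · obtain ⟨s, -, hs⟩ := id hh
    have hb : Bad init i j h := ⟨s, hs⟩
    rw [Set.indicator_of_mem hh]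
    simp [stopped, hb]
  · rw [Set.indicator_of_notMem hh]
    exact zero_le
end
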